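/- For the full shift T on X = ∏_{n∈ℤ} M over a Polish metric space M, the set {μ ∈ M_e : d̲_μ(x) = 0 for μ-a.e. x ∈ X} (equivalently, the set of ergodic invariant measures with Hausdorff dimension dim_H(μ) = 0) is dense in M_e (with the topology induced from the weak topology on M(T)). -/

import Mathlib

open Filter MeasureTheory Topology Metric Set
open scoped ENNReal NNReal

noncomputable section
attribute [local instance] Classical.propDecidable

/-- The full (bilateral) shift on the product space `ℤ → M`: `(T x) i = x (i - 1)`. -/
def fullShift {M : Type*} (x : ℤ → M) : ℤ → M := fun i => x (i - 1)

/-- The metric `d(x,y) = ∑_{n ∈ ℤ} 2^{-|n|} ρ(xₙ,yₙ)/(1 + ρ(xₙ,yₙ))` on `ℤ → M`,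
compatible with the product topology. -/
def shiftDist {M : Type*} [MetricSpace M] (x y : ℤ → M) : ℝ :=
  ∑' n : ℤ, (1 / 2 : ℝ) ^ n.natAbs * (dist (x n) (y n) / (1 + dist (x n) (y n)))

/-- Lower local dimension `d̲_μ(x) = liminf_{ε → 0⁺} log μ(B(x,ε)) / log ε` of `μ` at `x`,
with respect to the distance function `d`; by convention it is `∞` if some ball
centered at `x` has measure zero. -/
def lowerLocalDim {X : Type*} [MeasurableSpace X] (d : X → X → ℝ)
    (μ : Measure X) (x : X) : ℝ≥0∞ :=
  if ∃ ε > 0, μ {y | d x y < ε} = 0 then ⊤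
  else liminf (fun ε : ℝ =>
    ENNReal.ofReal (Real.log (μ {y | d x y < ε}).toReal / Real.log ε)) (𝓝[>] (0 : ℝ))

/-- Upper local dimension `d̄_μ(x) = limsup_{ε → 0⁺} log μ(B(x,ε)) / log ε`. -/
def upperLocalDim {X : Type*} [MeasurableSpace X] (d : X → X → ℝ)
    (μ : Measure X) (x : X) : ℝ≥0∞ :=
  if ∃ ε > 0, μ {y | d x y < ε} = 0 then ⊤
  else limsup (fun ε : ℝ =>
    ENNReal.ofReal (Real.log (μ {y | d x y < ε}).toReal / Real.log ε)) (𝓝[>] (0 : ℝ))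

/-- The ratio `log τ_r(x) / (- log r)`, where `τ_r(x) = inf {n ≥ 1 | Tⁿ x ∈ B̄(x,r)}` is the
first return time of `x` to the closed ball `B̄(x,r)`; by convention it is `∞` when the
return time is infinite. -/
def recRatio {X : Type*} (d : X → X → ℝ) (T : X → X) (x : X) (r : ℝ) : ℝ≥0∞ :=
  if ∃ n : ℕ, 1 ≤ n ∧ d (T^[n] x) x ≤ r then
    ENNReal.ofReal
      (Real.log ((sInf {n : ℕ | 1 ≤ n ∧ d (T^[n] x) x ≤ r} : ℕ) : ℝ) / (- Real.log r))
  else ⊤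

/-- Lower recurrence rate `R̲(x) = liminf_{r → 0⁺} log τ_r(x) / (- log r)`. -/
def lowerRecRate {X : Type*} (d : X → X → ℝ) (T : X → X) (x : X) : ℝ≥0∞ :=
  liminf (recRatio d T x) (𝓝[>] (0 : ℝ))

/-- Upper recurrence rate `R̄(x) = limsup_{r → 0⁺} log τ_r(x) / (- log r)`. -/
def upperRecRate {X : Type*} (d : X → X → ℝ) (T : X → X) (x : X) : ℝ≥0∞ :=
  limsup (recRatio d T x) (𝓝[>] (0 : ℝ))

/-- The ratio `log τ_r(x,y) / (- log r)`, where `τ_r(x,y) = inf {n ≥ 1 | Tⁿ x ∈ B̄(y,r)}` is the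
first entrance time of the orbit of `x` into the closed ball `B̄(y,r)`; by convention `∞`
when the entrance time is infinite. -/
def waitRatio {X : Type*} (d : X → X → ℝ) (T : X → X) (x y : X) (r : ℝ) : ℝ≥0∞ :=
  if ∃ n : ℕ, 1 ≤ n ∧ d (T^[n] x) y ≤ r then
    ENNReal.ofReal
      (Real.log ((sInf {n : ℕ | 1 ≤ n ∧ d (T^[n] x) y ≤ r} : ℕ) : ℝ) / (- Real.log r))
  else ⊤

/-- Lower quantitative waiting time indicator `R̲(x,y)`. -/
def lowerWaitRate {X : Type*} (d : X → X → ℝ) (T : X → X) (x y : X) : ℝ≥0∞ :=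
  liminf (waitRatio d T x y) (𝓝[>] (0 : ℝ))

/-- Upper quantitative waiting time indicator `R̄(x,y)`. -/
def upperWaitRate {X : Type*} (d : X → X → ℝ) (T : X → X) (x y : X) : ℝ≥0∞ :=
  limsup (waitRatio d T x y) (𝓝[>] (0 : ℝ))

/-- The entropy `H(P) = ∑_c -μ(P_c) log μ(P_c)` of the finite measurable partition
`P_c = f ⁻¹ {c}` of `X` induced by a map `f` into a finite set. -/
def partitionEntropy {X F : Type*} [MeasurableSpace X] [Fintype F]
    (μ : Measure X) (f : X → F) : ℝ :=
  ∑ c : F, Real.negMulLog ((μ (f ⁻¹' {c})).toReal)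

/-- The Kolmogorov–Sinai (measure-theoretic) entropy `h_μ(T)`: the supremum, over all finite
measurable partitions (coded by measurable maps `f : X → Fin k`), of the limit of
`H(⋁_{i<n} T⁻ⁱ P) / n`. -/
def kolmogorovSinaiEntropy {X : Type*} [MeasurableSpace X] (T : X → X) (μ : Measure X) :
    ℝ≥0∞ :=
  ⨆ (k : ℕ) (f : X → Fin k) (_ : Measurable f),
    ENNReal.ofReal
      (liminf (fun n : ℕ =>
        partitionEntropy μ (fun x (i : Fin n) => f (T^[(i : ℕ)] x)) / n) atTop)

end

theorem aux_vonNeumann {X : Type*} [MeasurableSpace X] {T : X → X} {μ : Measure X}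
    [IsProbabilityMeasure μ] (hT : Ergodic T μ) {A : Set X} (hA : MeasurableSet A)
    {ε : ℝ} (hε : 0 < ε) :
    Tendsto (fun N : ℕ => μ {x | ε ≤ |birkhoffAverage ℝ T (A.indicator 1) N x - μ.real A|})
      atTop (𝓝 0) := by
  have hmp := hT.toMeasurePreserving
  let U : Lp ℝ 2 μ →ₗᵢ[ℝ] Lp ℝ 2 μ := Lp.compMeasurePreservingₗᵢ ℝ T hmp
  let f : Lp ℝ 2 μ →L[ℝ] Lp ℝ 2 μ := U.toContinuousLinearMap
  have hf : ‖f‖ ≤ 1 := U.norm_toContinuousLinearMap_le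
  have hAt : μ A ≠ ∞ := measure_ne_top _ _
  let g : Lp ℝ 2 μ := indicatorConstLp 2 hA hAt (1 : ℝ)
  have hlim := f.tendsto_birkhoffAverage_orthogonalProjection hf g
  set P : Lp ℝ 2 μ := ((f.eqLocus (1 : Lp ℝ 2 μ →L[ℝ] Lp ℝ 2 μ)).orthogonalProjectionOnto g :
    Lp ℝ 2 μ) with hP
  have hPmem : P ∈ f.eqLocus (1 : Lp ℝ 2 μ →L[ℝ] Lp ℝ 2 μ) := Subtype.property _
  have hfP : f P = P := hPmem
  have hPc : (P : X → ℝ) ∘ T =ᵐ[μ] P := by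
    have h := Lp.coeFn_compMeasurePreserving P hmp
    have h2 : Lp.compMeasurePreserving T hmp P = P := hfP
    rw [h2] at h
    exact h.symm
  obtain ⟨c, hc⟩ := hT.ae_eq_const_of_ae_eq_comp_ae (Lp.aestronglyMeasurable P) hPc
  have hone : f (indicatorConstLp 2 MeasurableSet.univ (measure_ne_top μ univ) (1 : ℝ)) =
      indicatorConstLp 2 MeasurableSet.univ (measure_ne_top μ univ) (1 : ℝ) := by
    change Lp.compMeasurePreserving T hmp _ = _
    exact Lp.indicatorConstLp_compMeasurePreserving (p := 2) MeasurableSet.univ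
      (measure_ne_top μ univ) (1 : ℝ) hmp
  have horth := Submodule.sub_starProjection_mem_orthogonal
    (K := f.eqLocus (1 : Lp ℝ 2 μ →L[ℝ] Lp ℝ 2 μ)) g
  have horth1 := (Submodule.mem_orthogonal _ _).1 horth _ hone
  have hsub : ((g - P : Lp ℝ 2 μ) : X → ℝ) =ᵐ[μ] fun x => A.indicator (fun _ => (1:ℝ)) x - c := by
    filter_upwards [Lp.coeFn_sub g P, hc, indicatorConstLp_coeFn (p := 2) (hs := hA) (hμs := hAt)
      (c := (1 : ℝ))] with x h1 h2 h3
    rw [h1, Pi.sub_apply, h2, h3]; rfl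
  have hint : inner ℝ (indicatorConstLp 2 MeasurableSet.univ (measure_ne_top μ univ) (1 : ℝ))
      (g - P) = ∫ x in univ, (g - P : Lp ℝ 2 μ) x ∂μ :=
    MeasureTheory.L2.inner_indicatorConstLp_one _ _ _
  have hcA : c = μ.real A := by
    have h0 : ∫ x in univ, (g - P : Lp ℝ 2 μ) x ∂μ = 0 := hint.symm.trans horth1
    rw [setIntegral_univ, integral_congr_ae hsub, integral_sub
      ((integrable_const (1:ℝ)).indicator hA) (integrable_const c),
      integral_indicator_const _ hA] at h0
    simp at h0
    linarith
  have hmeas := tendstoInMeasure_of_tendsto_Lp hlim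
  rw [tendstoInMeasure_iff_norm] at hmeas
  refine (hmeas ε hε).congr fun N => measure_congr ?_
  have hiter : ∀ j : ℕ, ((f^[j] g : Lp ℝ 2 μ) : X → ℝ) =ᵐ[μ]
      fun x => A.indicator 1 (T^[j] x) := by
    intro j
    have h1 : f^[j] g = Lp.compMeasurePreserving T^[j] (hmp.iterate j) g := by
      rw [← Lp.compMeasurePreserving_iterate]; rfl
    rw [h1]
    refine (Lp.coeFn_compMeasurePreserving g (hmp.iterate j)).trans ?_
    exact (hmp.iterate j).quasiMeasurePreserving.ae_eq_comp
      (indicatorConstLp_coeFn (p := 2) (hs := hA) (hμs := hAt) (c := (1 : ℝ)))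
  have hav : ((birkhoffAverage ℝ f _root_.id N g : Lp ℝ 2 μ) : X → ℝ) =ᵐ[μ]
      fun x => birkhoffAverage ℝ T (A.indicator 1) N x := by
    unfold birkhoffAverage birkhoffSum
    have hs := Lp.coeFn_finsetSum (Finset.range N) (fun j => (f^[j] g : Lp ℝ 2 μ))
    filter_upwards [Lp.coeFn_smul ((N:ℝ)⁻¹) (∑ j ∈ Finset.range N, (f^[j] g : Lp ℝ 2 μ)),
      hs, ae_all_iff.2 hiter] with x h1 h2 h3
    simp only [id]
    rw [h1, Pi.smul_apply, h2]
    simp [h3]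
  filter_upwards [hav, hc] with x h1 h2
  apply propext
  change ε ≤ _ ↔ ε ≤ _
  rw [h1, h2, hcA]; rfl

/-- The uniform measure on the orbit segment `p, T p, …, T^{N-1} p`. -/
noncomputable def orbMeasure {X : Type*} [MeasurableSpace X] (T : X → X) (N : ℕ) (p : X) : Measure X :=
  (N : ℝ≥0∞)⁻¹ • ∑ j ∈ Finset.range N, Measure.dirac (T^[j] p)

theorem orbMeasure_apply {X : Type*} [MeasurableSpace X] (T : X → X) (N : ℕ) (p : X)
    {A : Set X} (hA : MeasurableSet A) :
    orbMeasure T N p A = (N : ℝ≥0∞)⁻¹ * ∑ j ∈ Finset.range N, A.indicator 1 (T^[j] p) := by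
  simp [orbMeasure, hA]

theorem orbMeasure_prob {X : Type*} [MeasurableSpace X] (T : X → X) {N : ℕ} (hN : 0 < N) (p : X) :
    IsProbabilityMeasure (orbMeasure T N p) := by
  constructor
  rw [orbMeasure_apply T N p MeasurableSet.univ]
  simp only [indicator_univ, Pi.one_apply, Finset.sum_const, Finset.card_range, nsmul_eq_mul,
    mul_one]
  exact ENNReal.inv_mul_cancel (by simpa using hN.ne') (by simp)

theorem orbMeasure_ergodic {X : Type*} [MeasurableSpace X] {T : X → X} (hT : Measurable T)
    {N : ℕ} {p : X} (hp : T^[N] p = p) : Ergodic T (orbMeasure T N p) := by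
  refine ⟨⟨hT, ?_⟩, ⟨?_⟩⟩
  · ext A hA
    rw [Measure.map_apply hT hA, orbMeasure_apply T N p hA, orbMeasure_apply T N p (hT hA)]
    congr 1
    have h1 : ∀ j, (T ⁻¹' A).indicator (1 : X → ℝ≥0∞) (T^[j] p) = A.indicator 1 (T^[j+1] p) := by
      intro j
      rw [Function.iterate_succ_apply']
      rfl
    simp_rw [h1]
    rcases N with _ | N
    · simp
    · rw [Finset.sum_range_succ, hp, Finset.sum_range_succ' _ N]
      rfl
  · intro s hs hTs
    have h1 : ∀ j, T^[j] p ∈ s ↔ p ∈ s := by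
      intro j
      induction j with
      | zero => rfl
      | succ j ih =>
        rw [Function.iterate_succ_apply', ← ih]
        change T^[j] p ∈ T ⁻¹' s ↔ _
        rw [hTs]
    rw [eventuallyConst_set']
    by_cases hps : p ∈ s
    · right
      rw [ae_eq_univ, orbMeasure_apply T N p hs.compl]
      simp [h1, hps]
    · left
      rw [ae_eq_empty, orbMeasure_apply T N p hs]
      simp [h1, hps]

theorem lowerLocalDim_eq_zero_of_atom {X : Type*} [MeasurableSpace X] {d : X → X → ℝ}
    {μ : Measure X} [IsProbabilityMeasure μ] {x : X} (hd : d x x = 0) (hx : μ {x} ≠ 0) :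
    lowerLocalDim d μ x = 0 := by
  have hle : ∀ ε > 0, μ {x} ≤ μ {y | d x y < ε} := by
    intro ε hε
    apply measure_mono
    rintro y rfl
    simpa [hd] using hε
  unfold lowerLocalDim
  rw [if_neg]
  · apply Tendsto.liminf_eq
    have hb : Tendsto (fun ε : ℝ => Real.log (μ {x}).toReal / Real.log ε) (𝓝[>] 0) (𝓝 0) :=
      Real.tendsto_log_nhdsGT_zero.const_div_atBot _
    have hb' := ENNReal.tendsto_ofReal hb
    rw [ENNReal.ofReal_zero] at hb'
    refine tendsto_of_tendsto_of_tendsto_of_le_of_le' tendsto_const_nhds hb'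
      (Eventually.of_forall fun _ => zero_le) ?_
    have h1 : ∀ᶠ ε : ℝ in 𝓝[>] 0, ε < 1 :=
      mem_nhdsWithin_of_mem_nhds (Iio_mem_nhds one_pos)
    filter_upwards [self_mem_nhdsWithin, h1] with ε hε hε1
    apply ENNReal.ofReal_le_ofReal
    apply div_le_div_of_nonpos_of_le (Real.log_nonpos (le_of_lt hε) hε1.le)
    apply Real.log_le_log
    · exact ENNReal.toReal_pos hx (measure_ne_top _ _)
    · exact ENNReal.toReal_mono (measure_ne_top _ _) (hle ε hε)
  · rintro ⟨ε, hε, h0⟩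
    exact hx (le_antisymm (h0 ▸ hle ε hε) zero_le)

theorem orbMeasure_ae {X : Type*} [MeasurableSpace X] [MeasurableSingletonClass X]
    (T : X → X) {N : ℕ} (p : X) :
    ∀ᵐ x ∂(orbMeasure T N p), orbMeasure T N p {x} ≠ 0 := by
  classical
  have hfin : (((Finset.range N).image (fun j => T^[j] p) : Finset X) : Set X).Finite :=
    Finset.finite_toSet _
  have h0 : orbMeasure T N p (((Finset.range N).image (fun j => T^[j] p) : Finset X) : Set X)ᶜ
      = 0 := by
    rw [orbMeasure_apply T N p hfin.measurableSet.compl]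
    simp only [mul_eq_zero]
    right
    apply Finset.sum_eq_zero
    intro j hj
    apply indicator_of_notMem
    simp only [mem_compl_iff, not_not]
    exact_mod_cast Finset.mem_image_of_mem _ hj
  rw [← mem_ae_iff] at h0
  filter_upwards [h0] with x hx
  rw [Finset.mem_coe, Finset.mem_image] at hx
  obtain ⟨j, hj, rfl⟩ := hx
  rw [orbMeasure_apply T N p (measurableSet_singleton _)]
  refine mul_ne_zero (by simp) ?_
  intro hs
  rw [Finset.sum_eq_zero_iff] at hs
  simpa using hs j hj

/-- `p` is the `N`-periodic point agreeing with `x` on `(-N, 0]`. -/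
def perPoint {M : Type*} (N : ℕ) (x : ℤ → M) : ℤ → M := fun i => x (-((-i) % (N : ℤ)))

theorem fullShift_iterate {M : Type*} (j : ℕ) (x : ℤ → M) (i : ℤ) :
    fullShift^[j] x i = x (i - j) := by
  induction j generalizing i with
  | zero => simp
  | succ j ih =>
    rw [Function.iterate_succ_apply', fullShift, ih]
    congr 1; push_cast; ring

theorem perPoint_periodic {M : Type*} (N : ℕ) (x : ℤ → M) :
    fullShift^[N] (perPoint N x) = perPoint N x := by
  funext i
  rw [fullShift_iterate]
  unfold perPoint
  have : -(i - (N:ℤ)) = -i + N := by ring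
  rw [this, Int.add_emod_right]

theorem perPoint_agree {M : Type*} {N k j : ℕ} (x : ℤ → M) (h1 : k ≤ j) (h2 : j + k < N)
    {i : ℤ} (hi : i.natAbs ≤ k) : fullShift^[j] (perPoint N x) i = fullShift^[j] x i := by
  rw [fullShift_iterate, fullShift_iterate]
  unfold perPoint
  rw [Int.emod_eq_of_lt (by omega) (by omega)]
  congr 1; ring

/-- The set `A` only depends on the coordinates in `[-k, k]`. -/
def DepOn {M : Type*} (k : ℕ) (A : Set (ℤ → M)) : Prop :=
  ∀ x y : ℤ → M, (∀ i : ℤ, i.natAbs ≤ k → x i = y i) → (x ∈ A ↔ y ∈ A)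

theorem sum_compare {M : Type*} {N k : ℕ} {A : Set (ℤ → M)} (hA : DepOn k A) (x : ℤ → M) :
    ∑ j ∈ Finset.range N, A.indicator (1 : (ℤ → M) → ℝ) (fullShift^[j] x) ≤
      ∑ j ∈ Finset.range N, A.indicator (1 : (ℤ → M) → ℝ) (fullShift^[j] (perPoint N x))
        + 2 * k := by
  have hkey : ∀ j ∈ Finset.range N, A.indicator (1 : (ℤ → M) → ℝ) (fullShift^[j] x) ≤
      A.indicator (1 : (ℤ → M) → ℝ) (fullShift^[j] (perPoint N x)) +
      (if j ∈ Finset.range k ∪ Finset.Ico (N - k) N then 1 else 0) := by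
    intro j hj
    have hj' := Finset.mem_range.1 hj
    split_ifs with h
    · have h1 : A.indicator (1 : (ℤ → M) → ℝ) (fullShift^[j] x) ≤ 1 :=
        indicator_le_self' (fun _ _ => zero_le_one) _
      have h2 : 0 ≤ A.indicator (1 : (ℤ → M) → ℝ) (fullShift^[j] (perPoint N x)) :=
        indicator_nonneg (fun _ _ => zero_le_one) _
      linarith
    · simp only [Finset.mem_union, Finset.mem_range, Finset.mem_Ico, not_or, not_and, not_lt] at h
      have := hA _ _ (fun i hi => perPoint_agree (N := N) x h.1 (by omega) hi)
      rw [add_zero]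
      by_cases hm : fullShift^[j] x ∈ A
      · rw [indicator_of_mem hm, indicator_of_mem (this.2 hm)]; rfl
      · rw [indicator_of_notMem hm, indicator_of_notMem (fun h => hm (this.1 h))]
  refine (Finset.sum_le_sum hkey).trans ?_
  rw [Finset.sum_add_distrib]
  gcongr
  rw [← Finset.sum_filter, Finset.sum_const, nsmul_eq_mul, mul_one]
  have hc : (Finset.filter (fun j => j ∈ Finset.range k ∪ Finset.Ico (N - k) N)
      (Finset.range N)).card ≤ 2 * k := by
    refine (Finset.card_le_card (t := Finset.range k ∪ Finset.Ico (N - k) N) ?_).trans ?_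
    · intro j hj; exact (Finset.mem_filter.1 hj).2
    · refine (Finset.card_union_le _ _).trans ?_
      simp only [Finset.card_range, Nat.card_Ico]; omega
  exact_mod_cast hc

theorem orbMeasure_real {X : Type*} [MeasurableSpace X] (T : X → X) (N : ℕ) (p : X)
    {A : Set X} (hA : MeasurableSet A) :
    (orbMeasure T N p).real A =
      (N : ℝ)⁻¹ * ∑ j ∈ Finset.range N, A.indicator (1 : X → ℝ) (T^[j] p) := by
  have hind : ∀ y, (A.indicator (1 : X → ℝ≥0∞) y).toReal = A.indicator (1 : X → ℝ) y := by
    intro y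
    by_cases h : y ∈ A <;> simp [h]
  rw [measureReal_def, orbMeasure_apply T N p hA, ENNReal.toReal_mul, ENNReal.toReal_sum]
  · simp [hind]
  · intro j _
    by_cases h : T^[j] p ∈ A <;> simp [h]

theorem exists_periodic_approx {M : Type*} [MeasurableSpace M] {μ : Measure (ℤ → M)}
    [IsProbabilityMeasure μ] (hμ : Ergodic fullShift μ) {ι : Type*} (S : Finset ι)
    (A : ι → Set (ℤ → M)) (hA : ∀ a ∈ S, MeasurableSet (A a)) (hk : ∀ a ∈ S, ∃ k, DepOn k (A a))
    {ε : ℝ} (hε : 0 < ε) :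
    ∃ N : ℕ, 0 < N ∧ ∃ p : ℤ → M, fullShift^[N] p = p ∧
      ∀ a ∈ S, μ.real (A a) ≤ (orbMeasure fullShift N p).real (A a) + ε := by
  have hsum : Tendsto (fun N : ℕ => ∑ a ∈ S, μ {x | ε / 2 ≤
      |birkhoffAverage ℝ fullShift ((A a).indicator 1) N x - μ.real (A a)|}) atTop (𝓝 0) := by
    have := tendsto_finsetSum S fun a ha => aux_vonNeumann hμ (hA a ha) (half_pos hε)
    simpa using this
  have hev1 := hsum.eventually (gt_mem_nhds (zero_lt_one (α := ℝ≥0∞)))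
  have hev2 : ∀ᶠ N : ℕ in atTop, ∀ a ∈ S, ∃ k, DepOn k (A a) ∧ (N : ℝ)⁻¹ * (2 * k) ≤ ε / 2 := by
    rw [Filter.eventually_all_finset]
    intro a ha
    obtain ⟨k, hk⟩ := hk a ha
    have h : Tendsto (fun N : ℕ => (N : ℝ)⁻¹ * (2 * k)) atTop (𝓝 (0 * (2 * k))) :=
      tendsto_inv_atTop_nhds_zero_nat.mul_const _
    rw [zero_mul] at h
    filter_upwards [h.eventually (gt_mem_nhds (half_pos hε))] with N hN
    exact ⟨k, hk, hN.le⟩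
  obtain ⟨N, h1, h2, hN⟩ := (hev1.and (hev2.and (eventually_gt_atTop 0))).exists
  have hx : ∃ x, x ∉ ⋃ a ∈ S, {x | ε / 2 ≤
      |birkhoffAverage ℝ fullShift ((A a).indicator 1) N x - μ.real (A a)|} := by
    by_contra! hcon
    have := measure_biUnion_finset_le (μ := μ) S (fun a => {x | ε / 2 ≤
      |birkhoffAverage ℝ fullShift ((A a).indicator 1) N x - μ.real (A a)|})
    rw [eq_univ_of_forall hcon, measure_univ] at this
    exact absurd h1 (not_lt.2 this)
  obtain ⟨x, hx⟩ := hx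
  refine ⟨N, hN, perPoint N x, perPoint_periodic N x, fun a ha => ?_⟩
  obtain ⟨k, hk, hkN⟩ := h2 a ha
  have hxa : |birkhoffAverage ℝ fullShift ((A a).indicator 1) N x - μ.real (A a)| < ε / 2 := by
    by_contra hcon
    exact hx (mem_biUnion ha (not_lt.1 hcon))
  rw [orbMeasure_real _ _ _ (hA a ha)]
  have hcmp := mul_le_mul_of_nonneg_left (sum_compare (N := N) hk x)
    (inv_nonneg.2 (Nat.cast_nonneg (α := ℝ) N))
  rw [mul_add] at hcmp
  have hb : birkhoffAverage ℝ fullShift ((A a).indicator (1 : (ℤ → M) → ℝ)) N x =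
      (N : ℝ)⁻¹ * ∑ j ∈ Finset.range N, (A a).indicator (1 : (ℤ → M) → ℝ) (fullShift^[j] x) := rfl
  rw [hb] at hxa
  have := (abs_lt.1 hxa).1
  linarith

theorem depOn_mono {M : Type*} {k l : ℕ} (h : k ≤ l) {A : Set (ℤ → M)} (hA : DepOn k A) :
    DepOn l A := fun x y hxy => hA x y fun i hi => hxy i (hi.trans h)

theorem depOn_biUnion {M : Type*} {ι : Type*} (F : Finset ι) (e : ι → Set (ℤ → M))
    (he : ∀ i, ∃ k, DepOn k (e i)) : ∃ k, DepOn k (⋃ i ∈ F, e i) := by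
  choose k hk using he
  refine ⟨F.sup k, fun x y hxy => ?_⟩
  have : ∀ i ∈ F, (x ∈ e i ↔ y ∈ e i) := fun i hi =>
    depOn_mono (Finset.le_sup hi) (hk i) x y hxy
  simp only [mem_iUnion]
  exact exists_congr fun i => exists_congr fun hi => this i hi

theorem exists_countable_cyl_basis {M : Type*} [TopologicalSpace M] [SecondCountableTopology M] :
    ∃ e : ℕ → Set (ℤ → M), (∀ n, IsOpen (e n)) ∧ (∀ n, ∃ k, DepOn k (e n)) ∧
      ∀ G : Set (ℤ → M), IsOpen G → ∀ x ∈ G, ∃ n, x ∈ e n ∧ e n ⊆ G := by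
  have hb := isTopologicalBasis_pi (X := fun _ : ℤ => M)
    (T := fun _ => {U | IsOpen U}) (fun _ => TopologicalSpace.isTopologicalBasis_opens)
  obtain ⟨B, hBs, hBc, hB⟩ := hb.exists_countable
  obtain ⟨e, he⟩ := (hBc.insert ∅).exists_eq_range ⟨∅, mem_insert _ _⟩
  have hmem : ∀ n, e n = ∅ ∨ e n ∈ B := fun n => by
    have : e n ∈ insert ∅ B := he ▸ mem_range_self n
    exact this
  refine ⟨e, fun n => ?_, fun n => ?_, fun G hG x hx => ?_⟩
  · rcases hmem n with h | h
    · rw [h]; exact isOpen_empty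
    · exact hB.isOpen h
  · rcases hmem n with h | h
    · rw [h]; exact ⟨0, fun _ _ _ => Iff.rfl⟩
    · obtain ⟨U, F, -, hUF⟩ := hBs h
      rw [hUF]
      refine ⟨F.sup Int.natAbs, fun x y hxy => ?_⟩
      simp only [Set.mem_pi, Finset.mem_coe]
      refine forall_congr' fun i => forall_congr' fun hi => ?_
      rw [hxy i (Finset.le_sup (f := Int.natAbs) hi)]
  · obtain ⟨v, hv, hxv, hvG⟩ := hB.exists_subset_of_mem_open hx hG
    have : v ∈ range e := he ▸ mem_insert_of_mem _ hv
    obtain ⟨n, rfl⟩ := this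
    exact ⟨n, hxv, hvG⟩

/-- For the full shift on `ℤ → M` over a Polish metric space `M`, the set
of ergodic invariant measures whose lower local dimension vanishes almost everywhere
(i.e. with Hausdorff dimension zero) is dense in `M_e`. -/
theorem fullShift_hausdorffDimZero_dense_in_ergodic {M : Type*} [MetricSpace M]
    [CompleteSpace M] [TopologicalSpace.SeparableSpace M]
    [MeasurableSpace M] [BorelSpace M] :
    Dense {μ : {ν : ProbabilityMeasure (ℤ → M) // Ergodic fullShift ν.toMeasure} |
        ∀ᵐ x ∂μ.1.toMeasure, lowerLocalDim shiftDist μ.1.toMeasure x = 0} := by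
  classical
  have : SecondCountableTopology M := UniformSpace.secondCountable_of_separable M
  have hmeas : Measurable (fullShift : (ℤ → M) → (ℤ → M)) :=
    measurable_pi_lambda _ fun i => measurable_pi_apply (i - 1)
  obtain ⟨e, heo, hek, heb⟩ := exists_countable_cyl_basis (M := M)
  intro μ
  have hμ := μ.2
  have happ : ∀ n : ℕ, ∃ N : ℕ, 0 < N ∧ ∃ p : ℤ → M, fullShift^[N] p = p ∧
      ∀ F ∈ (Finset.range n).powerset, μ.1.toMeasure.real (⋃ i ∈ F, e i) ≤
        (orbMeasure fullShift N p).real (⋃ i ∈ F, e i) + 1 / ((n : ℝ) + 1) := fun n =>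
    exists_periodic_approx hμ (Finset.range n).powerset (fun F => ⋃ i ∈ F, e i)
      (fun F _ => (isOpen_biUnion fun i _ => heo i).measurableSet)
      (fun F _ => depOn_biUnion F e hek) Nat.one_div_pos_of_nat
  choose N hN p hp hap using happ
  let ν : ℕ → {ν : ProbabilityMeasure (ℤ → M) // Ergodic fullShift ν.toMeasure} := fun n =>
    ⟨⟨orbMeasure fullShift (N n) (p n), orbMeasure_prob _ (hN n) _⟩,
      orbMeasure_ergodic hmeas (hp n)⟩
  refine mem_closure_of_tendsto (f := ν) (b := atTop) ?_ (Eventually.of_forall fun n => ?_)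
  · rw [tendsto_subtype_rng]
    refine tendsto_of_forall_isOpen_le_liminf' fun G hG => ?_
    refine le_of_forall_lt fun c hc => ?_
    let F : ℕ → Finset ℕ := fun m => (Finset.range m).filter fun i => e i ⊆ G
    have hFm : Monotone fun m => ⋃ i ∈ F m, e i := by
      intro a b hab
      refine biUnion_subset_biUnion_left fun i hi => ?_
      have hi' := Finset.mem_filter.1 hi
      exact Finset.mem_filter.2 ⟨Finset.range_mono hab hi'.1, hi'.2⟩
    have hFG : ⋃ m, ⋃ i ∈ F m, e i = G := by
      apply Subset.antisymm
      · exact iUnion_subset fun m => iUnion₂_subset fun i hi => (Finset.mem_filter.1 hi).2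
      · intro x hx
        obtain ⟨n, hxn, hn⟩ := heb G hG x hx
        refine mem_iUnion.2 ⟨n + 1, mem_biUnion (x := n) ?_ hxn⟩
        exact Finset.mem_filter.2 ⟨Finset.self_mem_range_succ n, hn⟩
    have hlim := tendsto_measure_iUnion_atTop (μ := μ.1.toMeasure) hFm
    rw [hFG] at hlim
    obtain ⟨m, hm⟩ := (hlim.eventually (lt_mem_nhds hc)).exists
    simp only [Function.comp] at hm
    obtain ⟨c', hcc', hc'm⟩ := exists_between hm
    refine hcc'.trans_le ?_
    have hc't : c' ≠ ∞ := hc'm.ne_top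
    have hreal : c'.toReal < μ.1.toMeasure.real (⋃ i ∈ F m, e i) :=
      (ENNReal.toReal_lt_toReal hc't (measure_ne_top _ _)).2 hc'm
    refine le_liminf_of_le (by isBoundedDefault) ?_
    have hsmall := (tendsto_one_div_add_atTop_nhds_zero_nat (𝕜 := ℝ)).eventually
      (gt_mem_nhds (sub_pos.2 hreal))
    filter_upwards [hsmall, eventually_ge_atTop m] with n hn hmn
    have h1 := hap n (F m) (Finset.mem_powerset.2
      ((Finset.filter_subset _ _).trans (Finset.range_mono hmn)))
    have h2 : c'.toReal ≤ (orbMeasure fullShift (N n) (p n)).real (⋃ i ∈ F m, e i) := by linarith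
    have := orbMeasure_prob fullShift (hN n) (p n)
    have h3 : c' ≤ orbMeasure fullShift (N n) (p n) (⋃ i ∈ F m, e i) :=
      (ENNReal.toReal_le_toReal hc't (measure_ne_top _ _)).1 h2
    refine h3.trans (measure_mono ?_)
    exact iUnion₂_subset fun i hi => (Finset.mem_filter.1 hi).2
  · change ∀ᵐ x ∂(orbMeasure fullShift (N n) (p n)),
      lowerLocalDim shiftDist (orbMeasure fullShift (N n) (p n)) x = 0
    have := orbMeasure_prob fullShift (hN n) (p n)
    filter_upwards [orbMeasure_ae fullShift (N := N n) (p n)] with x hx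
    exact lowerLocalDim_eq_zero_of_atom (by simp [shiftDist]) hx
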